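/- For every integer n ≥ 3, the adjacent-boundary doubly-refined ASM generating function with bulk parameters related by y = x+1 satisfies: (x·z1·z2 + z1 + z2 − 1)·Zadj_n(x,x+1;z1,z2) = z1·z2·((x·z1+1)(x·z2+1))^{n−1}·(x+1)^{(n−2)(n−3)/2} − (z1−1)(z2−1)·(x+1)^{(n−1)(n−2)/2}, as an identity of polynomials in ℤ[x,z1,z2]. -/

import Mathlib

open Finset

/-- The `n × n` integer matrix encoded by `e`, with entries in `{-1, 0, 1}`. -/
def asmMat {n : ℕ} (e : Fin n → Fin n → Fin 3) : Fin n → Fin n → ℤ :=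
  fun i j => (e i j : ℤ) - 1

/-- `A` is an alternating sign matrix: all entries lie in `{-1, 0, 1}`, every
partial row sum and every partial column sum is `0` or `1` (equivalently, the
nonzero entries of each row and of each column alternate in sign), and every
complete row sum and column sum is `1`. -/
def IsASM {n : ℕ} (A : Fin n → Fin n → ℤ) : Prop :=
  (∀ i j, A i j = -1 ∨ A i j = 0 ∨ A i j = 1) ∧
  (∀ (i j : Fin n), (∑ j' ∈ univ.filter (fun j' : Fin n => j' ≤ j), A i j') = 0 ∨
    (∑ j' ∈ univ.filter (fun j' : Fin n => j' ≤ j), A i j') = 1) ∧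
  (∀ (i j : Fin n), (∑ i' ∈ univ.filter (fun i' : Fin n => i' ≤ i), A i' j) = 0 ∨
    (∑ i' ∈ univ.filter (fun i' : Fin n => i' ≤ i), A i' j) = 1) ∧
  (∀ i : Fin n, (∑ j, A i j) = 1) ∧
  (∀ j : Fin n, (∑ i, A i j) = 1)

/-- `ν(A)`, the number of generalized inversions of `A`. -/
def nuASM {n : ℕ} (A : Fin n → Fin n → ℤ) : ℕ :=
  (∑ i : Fin n, ∑ i' : Fin n, ∑ j : Fin n, ∑ j' : Fin n,
      if i < i' ∧ j' ≤ j then A i j * A i' j' else 0).toNat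

/-- `μ(A)`, the number of entries of `A` equal to `-1`. -/
def muASM {n : ℕ} (A : Fin n → Fin n → ℤ) : ℕ :=
  (univ.filter (fun p : Fin n × Fin n => A p.1 p.2 = -1)).card

/-- `ρT(A)`, the number of `0`'s to the left of the `1` in the top row of `A`. -/
def rhoT {n : ℕ} (A : Fin n → Fin n → ℤ) : ℕ :=
  (univ.filter (fun j : Fin n =>
    A ⟨0, j.pos⟩ j = 0 ∧ ∃ j' : Fin n, j < j' ∧ A ⟨0, j.pos⟩ j' = 1)).card

/-- `ρR(A)`, the number of `0`'s below the `1` in the right-most column of `A`. -/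
def rhoR {n : ℕ} (A : Fin n → Fin n → ℤ) : ℕ :=
  (univ.filter (fun i : Fin n =>
    A i ⟨n - 1, Nat.sub_lt i.pos Nat.one_pos⟩ = 0 ∧
      ∃ i' : Fin n, i' < i ∧ A i' ⟨n - 1, Nat.sub_lt i.pos Nat.one_pos⟩ = 1)).card

/-- `ρB(A)`, the number of `0`'s to the right of the `1` in the bottom row of `A`. -/
def rhoB {n : ℕ} (A : Fin n → Fin n → ℤ) : ℕ :=
  (univ.filter (fun j : Fin n =>
    A ⟨n - 1, Nat.sub_lt j.pos Nat.one_pos⟩ j = 0 ∧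
      ∃ j' : Fin n, j' < j ∧ A ⟨n - 1, Nat.sub_lt j.pos Nat.one_pos⟩ j' = 1)).card

/-- `ρL(A)`, the number of `0`'s above the `1` in the left-most column of `A`. -/
def rhoL {n : ℕ} (A : Fin n → Fin n → ℤ) : ℕ :=
  (univ.filter (fun i : Fin n =>
    A i ⟨0, i.pos⟩ = 0 ∧ ∃ i' : Fin n, i < i' ∧ A i' ⟨0, i.pos⟩ = 1)).card

open Classical in
/-- The quadruply-refined ASM generating function
`Zqua_n(x,y;z1,z2,z3,z4) = Σ_A x^{ν(A)} y^{μ(A)} z1^{ρT(A)} z2^{ρR(A)} z3^{ρB(A)} z4^{ρL(A)}`. -/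
noncomputable def Zqua (n : ℕ) {R : Type*} [CommRing R] (x y z1 z2 z3 z4 : R) : R :=
  ∑ e : Fin n → Fin n → Fin 3,
    if IsASM (asmMat e) then
      x ^ nuASM (asmMat e) * y ^ muASM (asmMat e) * z1 ^ rhoT (asmMat e) *
        z2 ^ rhoR (asmMat e) * z3 ^ rhoB (asmMat e) * z4 ^ rhoL (asmMat e)
    else 0

/-- Adjacent-boundary doubly-refined generating function `Zadj_n(x,y;z1,z2)`. -/
noncomputable def Zadj (n : ℕ) {R : Type*} [CommRing R] (x y z1 z2 : R) : R :=
  Zqua n x y z1 1 1 z2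

/-- Alternative adjacent-boundary doubly-refined generating function `Zbaradj_n(x,y;z1,z2)`. -/
noncomputable def Zbaradj (n : ℕ) {R : Type*} [CommRing R] (x y z1 z2 : R) : R :=
  Zqua n x y z1 z2 1 1

/-- Triply-refined generating function `Ztri_n(x,y;z1,z2,z3)`. -/
noncomputable def Ztri (n : ℕ) {R : Type*} [CommRing R] (x y z1 z2 z3 : R) : R :=
  Zqua n x y z1 1 z2 z3

/-- Opposite-boundary doubly-refined generating function `Zopp_n(x,y;z1,z2)`. -/
noncomputable def Zopp (n : ℕ) {R : Type*} [CommRing R] (x y z1 z2 : R) : R :=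
  Zqua n x y z1 1 z2 1

/-- Singly-refined generating function `Z_n(x,y;z)`. -/
noncomputable def Zsing (n : ℕ) {R : Type*} [CommRing R] (x y z : R) : R :=
  Zqua n x y z 1 1 1

/-- Unrefined generating function `Z_n(x,y)`.  Note `Zun 0 x y = 1`. -/
noncomputable def Zun (n : ℕ) {R : Type*} [CommRing R] (x y : R) : R :=
  Zqua n x y 1 1 1 1

/-!
Compare ASMs of consecutive sizes `n + 1` and `n` through the compatible pairs of Robbins and
Rumsey, which are the domino tilings of an Aztec diamond (Elkies, Kuperberg, Larsen and Propp).
Written in terms of corner sums `a` and `b`, compatibility confines each value of either one to an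
interval of at most two integers determined by the other, so that with a weight that is a product
over positions the sum over one of the two, the other being fixed, factorizes. Give a pair the
weight `x ^ d`, where `d` is the number of positions with `b (i, j) = a (i + 1, j + 1)`. Then
summing over `b` yields `x ^ ν * (x + 1) ^ μ` for the larger ASM. Summing over `a` yields `x ^ ν`
for the smaller ASM times a factor `x + 1` for each of its entries `1`; when the boundary
refinement is carried along, an entry `1` in the first row or column gets `x * z1 + 1` or
`x * z2 + 1` instead, and one in the corner gets `x * z1 * z2 + 1`. Since every row and column
has one more `1` than `-1`s, this produces again the weight `x ^ ν * (x + 1) ^ μ`, up to a factor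
that depends only on whether the corner entry is `1`. The result is a recursion in `n`, and the
formula follows by induction.
-/

/-! ### Sums over functions with prescribed finite ranges -/

section PiExtend

variable {ι β R : Type*} [DecidableEq ι] [CommSemiring R]

open Classical in
/-- The functions `f` with `f i ∈ t i` for `i ∈ S` that agree with the default `d` off `S`: the
copy of `Finset.pi S t` among the functions defined on the whole of `ι`. -/
noncomputable def piExtend (S : Finset ι) (d : ι → β) (t : ι → Finset β) : Finset (ι → β) :=
  (S.pi t).image fun f i => if h : i ∈ S then f i h else d i

theorem mem_piExtend {S : Finset ι} {d : ι → β} {t : ι → Finset β} {f : ι → β} :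
    f ∈ piExtend S d t ↔ (∀ i ∈ S, f i ∈ t i) ∧ ∀ i ∉ S, f i = d i := by
  simp only [piExtend, mem_image, mem_pi]
  constructor
  · rintro ⟨g, hg, rfl⟩
    exact ⟨fun i hi => by simpa [hi] using hg i hi, fun i hi => by simp [hi]⟩
  · rintro ⟨hS, hd⟩
    refine ⟨fun i _ => f i, hS, ?_⟩
    funext i
    by_cases hi : i ∈ S <;> simp [hi, hd]

theorem sum_piExtend_prod (S : Finset ι) (d : ι → β) (t : ι → Finset β) (F : ι → β → R) :
    ∑ f ∈ piExtend S d t, ∏ i ∈ S, F i (f i) = ∏ i ∈ S, ∑ v ∈ t i, F i v := by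
  classical
  rw [prod_sum, piExtend, sum_image]
  · refine sum_congr rfl fun f _ => ?_
    rw [← prod_attach]
    exact prod_congr rfl fun i _ => by simp
  · intro f _ g _ h
    funext i hi
    simpa [hi] using congrFun h i

end PiExtend

/-! ### Finite sums and products of small integers -/

theorem sum_fin_filter_lt {M : Type*} [AddCommMonoid M] {n k : ℕ} (hk : k ≤ n) (g : ℕ → M) :
    ∑ j : Fin n with j.val < k, g j = ∑ j ∈ range k, g j := by
  rw [sum_filter, Fin.sum_univ_eq_sum_range (fun j => if j < k then g j else 0), ← sum_filter]
  congr 1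
  ext j
  simp only [mem_filter, mem_range]
  omega

theorem Icc_self_add_one (p : ℤ) : Icc p (p + 1) = {p, p + 1} := by
  ext v
  simp only [mem_Icc, mem_insert, mem_singleton]
  omega

theorem prod_ite_eq_one_entries {ι R : Type*} [CommMonoid R] {S : Finset ι} {c : ι → ℤ}
    (hc : ∀ i ∈ S, c i = -1 ∨ c i = 0 ∨ c i = 1) (w : R) {k : ℕ} (hk : ∑ i ∈ S, c i = k) :
    ∏ i ∈ S, (if c i = 1 then w else 1) = w ^ k * ∏ i ∈ S, if c i = -1 then w else 1 := by
  have hcard : #{i ∈ S | c i = 1} = k + #{i ∈ S | c i = -1} := by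
    zify
    rw [← hk, card_filter, card_filter]
    push_cast
    rw [← sum_add_distrib]
    refine sum_congr rfl fun i hi => ?_
    rcases hc i hi with h | h | h <;> simp [h]
  simp only [prod_ite, prod_const, one_pow, mul_one, hcard, pow_add]

theorem prod_range_succ_square {R : Type*} [CommMonoid R] {n : ℕ} {F : ℕ → ℕ → R}
    (hrow : ∀ j ≤ n, F n j = 1) (hcol : ∀ i ≤ n, F i n = 1) :
    ∏ i ∈ range (n + 1), ∏ j ∈ range (n + 1), F i j = ∏ i ∈ range n, ∏ j ∈ range n, F i j := by
  rw [prod_range_succ, prod_eq_one fun j hj => hrow j (mem_range_succ_iff.1 hj), mul_one]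
  exact prod_congr rfl fun i hi => by
    rw [prod_range_succ, hcol i (mem_range.1 hi).le, mul_one]

theorem prod_range_succ_square' {R : Type*} [CommMonoid R] (F : ℕ → ℕ → R) (m : ℕ) :
    ∏ i ∈ range (m + 1), ∏ j ∈ range (m + 1), F i j =
      F 0 0 * (∏ j ∈ range m, F 0 (j + 1)) * (∏ i ∈ range m, F (i + 1) 0) *
        ∏ i ∈ range m, ∏ j ∈ range m, F (i + 1) (j + 1) := by
  simp only [prod_range_succ', prod_mul_distrib]
  ac_rfl

/-- In a sequence of partial sums `f`, the zeros to the left of the unique `1` are the positions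
at which the partial sum still vanishes. -/
theorem card_zeros_before_one {n : ℕ} {f : ℕ → ℤ} (h0 : f 0 = 0) (hn : f n = 1)
    (hf : ∀ j, f (j + 1) = f j ∨ f (j + 1) = f j + 1) :
    #{j : Fin n | f (j + 1) - f j = 0 ∧ ∃ j' : Fin n, j < j' ∧ f (j' + 1) - f j' = 1} =
      ∑ j ∈ range n, (1 - f (j + 1)).toNat := by
  have hmono : Monotone f := monotone_nat_of_le_succ fun j => by have := hf j; omega
  have exists_step : ∀ k, f k = 0 → k ≤ n → ∃ j, k ≤ j ∧ j < n ∧ f (j + 1) - f j = 1 := by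
    intro k hk hkn
    by_contra! hno
    have hconst : ∀ l, k ≤ l → l ≤ n → f l = 0 := by
      intro l hl
      induction l, hl using Nat.le_induction with
      | base => exact fun _ => hk
      | succ l hl ih =>
        intro hln
        have := hno l hl (by omega)
        have := hf l
        have := ih (by omega)
        omega
    have := hconst n hkn le_rfl
    omega
  rw [card_filter, Finset.sum_range]
  refine sum_congr rfl fun j _ => ?_
  have hj0 : 0 ≤ f j := h0 ▸ hmono (Nat.zero_le j)
  have hj1 : f j ≤ f (j + 1) := hmono (Nat.le_succ j)
  have hjn : f (j + 1) ≤ 1 := hn ▸ hmono j.2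
  split_ifs with h
  · obtain ⟨-, j', hjj', hstep⟩ := h
    have : f (j + 1) ≤ f j' := hmono hjj'
    have : f (j' + 1) ≤ f n := hmono j'.2
    omega
  · by_contra hne
    obtain ⟨j', hjj', hj'n, hstep⟩ := exists_step (j + 1) (by omega) j.2
    exact h ⟨by omega, ⟨j', hj'n⟩, hjj', hstep⟩

/-! ### Corner sums -/

/-- The functions `a` such that `a (i, j)` is the sum of the first `i` rows and `j` columns of
an ASM `A` of size `n`. To avoid conditions on the indices, `A` is continued to the whole quadrant
as the block sum of `A` and an infinite identity matrix, so that `a (i, j) = min i j` beyond the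
size of `A`. -/
structure IsCornerSum (n : ℕ) (a : ℕ × ℕ → ℤ) : Prop where
  boundary : ∀ i j, i = 0 ∨ j = 0 ∨ n ≤ i ∨ n ≤ j → a (i, j) = min (i : ℤ) j
  row_step : ∀ i j, a (i, j + 1) = a (i, j) ∨ a (i, j + 1) = a (i, j) + 1
  col_step : ∀ i j, a (i + 1, j) = a (i, j) ∨ a (i + 1, j) = a (i, j) + 1

/-- The matrix entry recovered from its corner sums. -/
def cornerEntry (a : ℕ × ℕ → ℤ) (i j : ℕ) : ℤ :=
  a (i + 1, j + 1) - a (i + 1, j) - a (i, j + 1) + a (i, j)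

theorem cornerEntry_swap (a : ℕ × ℕ → ℤ) (i j : ℕ) :
    cornerEntry (a ∘ Prod.swap) i j = cornerEntry a j i := by
  simp only [cornerEntry, Function.comp_apply, Prod.swap_prod_mk]
  ring

theorem sum_range_cornerEntry (a : ℕ × ℕ → ℤ) (i j₀ k : ℕ) :
    ∑ j ∈ range k, cornerEntry a i (j + j₀) =
      a (i + 1, k + j₀) - a (i, k + j₀) - (a (i + 1, j₀) - a (i, j₀)) := by
  have htel := sum_range_sub (fun j => a (i + 1, j + j₀) - a (i, j + j₀)) k
  simp only [zero_add] at htel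
  rw [← htel]
  refine sum_congr rfl fun j _ => ?_
  rw [cornerEntry, add_right_comm]
  ring

theorem sum_range_sum_range_cornerEntry (a : ℕ × ℕ → ℤ) (i₀ j₀ k l : ℕ) :
    ∑ i ∈ range k, ∑ j ∈ range l, cornerEntry a (i + i₀) (j + j₀) =
      a (k + i₀, l + j₀) - a (k + i₀, j₀) - (a (i₀, l + j₀) - a (i₀, j₀)) := by
  have htel := sum_range_sub (fun i => a (i + i₀, l + j₀) - a (i + i₀, j₀)) k
  simp only [zero_add] at htel
  rw [← htel]
  refine sum_congr rfl fun i _ => ?_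
  rw [sum_range_cornerEntry, add_right_comm]
  ring

namespace IsCornerSum

variable {n : ℕ} {a : ℕ × ℕ → ℤ}

theorem swap (ha : IsCornerSum n a) : IsCornerSum n (a ∘ Prod.swap) where
  boundary i j h := by
    have := ha.boundary j i (by omega)
    simpa [min_comm] using this
  row_step i j := ha.col_step j i
  col_step i j := ha.row_step j i

theorem left (ha : IsCornerSum n a) (i : ℕ) : a (i, 0) = 0 := by
  simpa using ha.boundary i 0 (by simp)

theorem top (ha : IsCornerSum n a) (j : ℕ) : a (0, j) = 0 := ha.swap.left j

theorem right (ha : IsCornerSum n a) {i : ℕ} (hi : i ≤ n) : a (i, n) = i := by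
  simpa [hi] using ha.boundary i n (by simp)

theorem bottom (ha : IsCornerSum n a) {j : ℕ} (hj : j ≤ n) : a (n, j) = j := ha.swap.right hj

theorem cornerEntry_cases (ha : IsCornerSum n a) (i j : ℕ) :
    cornerEntry a i j = -1 ∨ cornerEntry a i j = 0 ∨ cornerEntry a i j = 1 := by
  have := ha.row_step i j
  have := ha.row_step (i + 1) j
  simp only [cornerEntry]
  omega

theorem cornerEntry_outside (ha : IsCornerSum n a) {i j : ℕ} (h : ¬(i < n ∧ j < n)) :
    cornerEntry a i j = if i = j then 1 else 0 := by
  rw [cornerEntry, ha.boundary i j (by omega), ha.boundary (i + 1) j (by omega),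
    ha.boundary i (j + 1) (by omega), ha.boundary (i + 1) (j + 1) (by omega)]
  split_ifs <;> push_cast <;> omega

theorem sum_row (ha : IsCornerSum n a) (i j : ℕ) :
    ∑ k ∈ range j, cornerEntry a i k = a (i + 1, j) - a (i, j) := by
  simpa [ha.left] using sum_range_cornerEntry a i 0 j

theorem cornerEntry_zero_left (ha : IsCornerSum n a) (j : ℕ) :
    cornerEntry a 0 j = a (1, j + 1) - a (1, j) := by
  simp [cornerEntry, ha.top]

theorem cornerEntry_zero_right (ha : IsCornerSum n a) (i : ℕ) :
    cornerEntry a i 0 = a (i + 1, 1) - a (i, 1) := by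
  rw [← cornerEntry_swap, ha.swap.cornerEntry_zero_left]
  rfl

theorem one_one_cases (ha : IsCornerSum n a) : a (1, 1) = 0 ∨ a (1, 1) = 1 := by
  have := ha.row_step 1 0
  rwa [ha.left] at this

theorem one_le_of_one_one (ha : IsCornerSum n a) (h : a (1, 1) = 1) (j : ℕ) :
    1 ≤ a (1, j + 1) := by
  have hmono : Monotone fun j => a (1, j + 1) :=
    monotone_nat_of_le_succ fun j => by have := ha.row_step 1 (j + 1); omega
  exact h ▸ hmono (Nat.zero_le j)

end IsCornerSum

/-! ### Alternating sign matrices and corner sums -/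

/-- The block sum of `A` and an infinite identity matrix. -/
def extendASM {n : ℕ} (A : Fin n → Fin n → ℤ) (i j : ℕ) : ℤ :=
  if h : i < n ∧ j < n then A ⟨i, h.1⟩ ⟨j, h.2⟩ else if i = j then 1 else 0

/-- The sum of the first `p.1` rows and `p.2` columns of the continuation of `A` to the
quadrant. -/
def cornerSum {n : ℕ} (A : Fin n → Fin n → ℤ) (p : ℕ × ℕ) : ℤ :=
  ∑ i ∈ range p.1, ∑ j ∈ range p.2, extendASM A i j

section CornerSum

variable {n : ℕ} (A : Fin n → Fin n → ℤ)

theorem extendASM_val (i j : Fin n) : extendASM A i j = A i j := by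
  simp [extendASM]

theorem extendASM_of_lt {i j : ℕ} (hi : i < n) (hj : j < n) :
    extendASM A i j = A ⟨i, hi⟩ ⟨j, hj⟩ := by
  simp [extendASM, hi, hj]

theorem extendASM_of_le {i j : ℕ} (h : n ≤ i ∨ n ≤ j) :
    extendASM A i j = if i = j then 1 else 0 := by
  rw [extendASM, dif_neg (by omega)]

theorem extendASM_transpose (i j : ℕ) : extendASM (fun i j => A j i) i j = extendASM A j i := by
  simp only [extendASM, and_comm, eq_comm]

theorem cornerSum_transpose : cornerSum (fun i j => A j i) = cornerSum A ∘ Prod.swap := by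
  funext p
  simp only [cornerSum, extendASM_transpose]
  exact sum_comm

theorem cornerSum_succ_fst (i j : ℕ) :
    cornerSum A (i + 1, j) = cornerSum A (i, j) + ∑ k ∈ range j, extendASM A i k :=
  sum_range_succ _ _

theorem cornerEntry_cornerSum (i j : ℕ) :
    cornerEntry (cornerSum A) i j = extendASM A i j := by
  rw [cornerEntry, cornerSum_succ_fst, cornerSum_succ_fst, sum_range_succ]
  ring

theorem cornerSum_injective :
    Function.Injective (cornerSum : (Fin n → Fin n → ℤ) → ℕ × ℕ → ℤ) := by
  intro A B h
  funext i j
  rw [← extendASM_val A, ← extendASM_val B, ← cornerEntry_cornerSum, h, cornerEntry_cornerSum]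

end CornerSum

namespace IsASM

variable {n : ℕ} {A : Fin n → Fin n → ℤ}

theorem transpose (hA : IsASM A) : IsASM fun i j => A j i :=
  ⟨fun i j => hA.1 j i, fun i j => hA.2.2.1 j i, fun i j => hA.2.1 j i, hA.2.2.2.2, hA.2.2.2.1⟩

theorem sum_extendASM_row (hA : IsASM A) (i : Fin n) :
    ∑ k ∈ range n, extendASM A i k = 1 := by
  rw [← Fin.sum_univ_eq_sum_range, ← hA.2.2.2.1 i]
  exact sum_congr rfl fun j _ => extendASM_val A i j

theorem sum_extendASM_of_le (hA : IsASM A) (i : ℕ) {j : ℕ} (hj : n ≤ j) :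
    ∑ k ∈ range j, extendASM A i k = if i < j then 1 else 0 := by
  by_cases hi : i < n
  · rw [if_pos (by omega), ← hA.sum_extendASM_row ⟨i, hi⟩]
    refine (sum_subset (range_mono hj) fun k _ hk => ?_).symm
    rw [mem_range] at hk
    rw [extendASM_of_le A (by omega), if_neg (by omega)]
  · rw [sum_congr rfl fun k _ => extendASM_of_le A (Or.inl (not_lt.1 hi))]
    simp

theorem sum_extendASM_cases (hA : IsASM A) (i j : ℕ) :
    ∑ k ∈ range j, extendASM A i k = 0 ∨ ∑ k ∈ range j, extendASM A i k = 1 := by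
  by_cases hj : n ≤ j
  · rw [hA.sum_extendASM_of_le i hj]
    split_ifs <;> simp
  by_cases hi : i < n
  · obtain _ | j := j
    · simp
    · have hpartial := hA.2.1 ⟨i, hi⟩ ⟨j, by omega⟩
      simp only [Fin.le_def, ← Nat.lt_succ_iff, ← extendASM_val A] at hpartial
      rwa [sum_fin_filter_lt (by omega)] at hpartial
  · rw [sum_congr rfl fun k _ => extendASM_of_le A (Or.inl (not_lt.1 hi))]
    simp only [sum_ite_eq]
    split_ifs <;> simp

theorem cornerSum_of_le (hA : IsASM A) (i : ℕ) {j : ℕ} (hj : n ≤ j) :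
    cornerSum A (i, j) = min (i : ℤ) j := by
  rw [cornerSum, sum_congr rfl fun k _ => hA.sum_extendASM_of_le k hj, sum_boole,
    ← Nat.cast_min]
  congr 1
  rw [← card_range (min i j)]
  congr 1
  ext k
  simp

theorem cornerSum_succ_fst_cases (hA : IsASM A) (i j : ℕ) :
    cornerSum A (i + 1, j) = cornerSum A (i, j) ∨
      cornerSum A (i + 1, j) = cornerSum A (i, j) + 1 := by
  rw [cornerSum_succ_fst]
  have := hA.sum_extendASM_cases i j
  omega

theorem isCornerSum (hA : IsASM A) : IsCornerSum n (cornerSum A) where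
  boundary i j h := by
    rcases h with rfl | rfl | hi | hj
    · simp [cornerSum]
    · simp [cornerSum]
    · have := hA.transpose.cornerSum_of_le j hi
      rwa [cornerSum_transpose, min_comm] at this
    · exact hA.cornerSum_of_le i hj
  row_step i j := by
    have := hA.transpose.cornerSum_succ_fst_cases j i
    rwa [cornerSum_transpose] at this
  col_step := hA.cornerSum_succ_fst_cases

end IsASM

namespace IsCornerSum

variable {n : ℕ} {a : ℕ × ℕ → ℤ}

theorem extendASM_cornerEntry (ha : IsCornerSum n a) (i j : ℕ) :
    extendASM (fun i j : Fin n => cornerEntry a i j) i j = cornerEntry a i j := by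
  by_cases h : i < n ∧ j < n
  · rw [extendASM, dif_pos h]
  · rw [extendASM, dif_neg h, ha.cornerEntry_outside h]

theorem cornerSum_cornerEntry (ha : IsCornerSum n a) :
    cornerSum (fun i j : Fin n => cornerEntry a i j) = a := by
  funext ⟨i, j⟩
  simp only [cornerSum, ha.extendASM_cornerEntry]
  simpa [ha.left, ha.top] using sum_range_sum_range_cornerEntry a 0 0 i j

theorem sum_row_filter_le (ha : IsCornerSum n a) (i j : Fin n) :
    ∑ j' : Fin n with j' ≤ j, cornerEntry a i j' = a (i + 1, j + 1) - a (i, j + 1) := by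
  simp only [Fin.le_def, ← Nat.lt_succ_iff]
  rw [sum_fin_filter_lt j.2, ha.sum_row]

theorem sum_row_univ (ha : IsCornerSum n a) (i : Fin n) :
    ∑ j : Fin n, cornerEntry a i j = 1 := by
  rw [Fin.sum_univ_eq_sum_range, ha.sum_row, ha.right i.2, ha.right i.2.le]
  push_cast
  ring

theorem isASM (ha : IsCornerSum n a) : IsASM fun i j : Fin n => cornerEntry a i j := by
  refine ⟨fun i j => ha.cornerEntry_cases i j, fun i j => ?_, fun i j => ?_, ha.sum_row_univ,
    fun j => ?_⟩
  · rw [ha.sum_row_filter_le]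
    have := ha.col_step i (j + 1)
    omega
  · simp only [← cornerEntry_swap a]
    rw [ha.swap.sum_row_filter_le]
    have := ha.swap.col_step j (i + 1)
    omega
  · simp only [← cornerEntry_swap a]
    exact ha.swap.sum_row_univ j

end IsCornerSum

theorem asmMat_injective {n : ℕ} : Function.Injective (asmMat (n := n)) := by
  intro e e' h
  funext i j
  have := congrFun (congrFun h i) j
  simp only [asmMat] at this
  omega

theorem exists_asmMat_eq {n : ℕ} {A : Fin n → Fin n → ℤ}
    (hA : ∀ i j, A i j = -1 ∨ A i j = 0 ∨ A i j = 1) : ∃ e, asmMat e = A := by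
  have hcode (i j) : ∃ c : Fin 3, (c : ℤ) - 1 = A i j := by
    rcases hA i j with h | h | h <;> rw [h]
    exacts [⟨0, rfl⟩, ⟨1, rfl⟩, ⟨2, rfl⟩]
  choose e he using hcode
  exact ⟨e, funext₂ he⟩

open Classical in
/-- The corner sum functions of all ASMs of size `n`. -/
noncomputable def cornerSums (n : ℕ) : Finset (ℕ × ℕ → ℤ) :=
  (univ.filter fun e : Fin n → Fin n → Fin 3 => IsASM (asmMat e)).image (cornerSum ∘ asmMat)

theorem mem_cornerSums {n : ℕ} {a : ℕ × ℕ → ℤ} : a ∈ cornerSums n ↔ IsCornerSum n a := by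
  simp only [cornerSums, mem_image, mem_filter_univ, Function.comp_apply]
  constructor
  · rintro ⟨e, he, rfl⟩
    exact he.isCornerSum
  · intro ha
    obtain ⟨e, he⟩ := exists_asmMat_eq ha.isASM.1
    exact ⟨e, he ▸ ha.isASM, he ▸ ha.cornerSum_cornerEntry⟩

/-! ### The statistics in terms of corner sums -/

section Statistics

variable {n : ℕ} {A : Fin n → Fin n → ℤ}

theorem sum_inversions (A : Fin n → Fin n → ℤ) :
    (∑ i : Fin n, ∑ i' : Fin n, ∑ j : Fin n, ∑ j' : Fin n,
      if i < i' ∧ j' ≤ j then A i j * A i' j' else 0) =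
      ∑ i : Fin n, ∑ j' : Fin n, (∑ i' with i < i', A i' j') * ∑ j with j' ≤ j, A i j := by
  refine sum_congr rfl fun i _ => ?_
  simp only [mul_comm (A i _), sum_filter, sum_mul_sum, ite_zero_mul_ite_zero]
  exact (sum_congr rfl fun i' _ => sum_comm).trans sum_comm

theorem IsASM.sum_filter_le_val (hA : IsASM A) (i : Fin n) {k : ℕ} (hk : k ≤ n) :
    ∑ j with k ≤ j.val, A i j = 1 - (cornerSum A (i + 1, k) - cornerSum A (i, k)) := by
  have hlt : ∑ j with j.val < k, A i j = ∑ j ∈ range k, extendASM A i j := by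
    rw [← sum_fin_filter_lt hk]
    exact sum_congr rfl fun j _ => (extendASM_val A i j).symm
  rw [cornerSum_succ_fst, add_sub_cancel_left, ← hlt, ← hA.2.2.2.1 i, eq_sub_iff_add_eq]
  simp only [← not_lt]
  rw [add_comm, sum_filter_add_sum_filter_not]

theorem IsASM.sum_filter_ge (hA : IsASM A) (i j : Fin n) :
    ∑ j' with j ≤ j', A i j' = 1 - (cornerSum A (i + 1, j) - cornerSum A (i, j)) :=
  hA.sum_filter_le_val i j.2.le

theorem IsASM.sum_filter_gt (hA : IsASM A) (i j : Fin n) :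
    ∑ i' with i < i', A i' j =
      1 - (cornerSum A (i + 1, j + 1) - cornerSum A (i + 1, j)) := by
  have := hA.transpose.sum_filter_le_val j i.2
  rwa [cornerSum_transpose] at this

theorem IsASM.nuASM_eq (hA : IsASM A) :
    nuASM A = ∑ i ∈ range n, ∑ j ∈ range n,
      if cornerSum A (i, j) = cornerSum A (i + 1, j) ∧
        cornerSum A (i + 1, j) = cornerSum A (i + 1, j + 1) then 1 else 0 := by
  have hfactor (i j : ℕ) :
      (1 - (cornerSum A (i + 1, j + 1) - cornerSum A (i + 1, j))) *
        (1 - (cornerSum A (i + 1, j) - cornerSum A (i, j))) =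
      ((if cornerSum A (i, j) = cornerSum A (i + 1, j) ∧
        cornerSum A (i + 1, j) = cornerSum A (i + 1, j + 1) then 1 else 0 : ℕ) : ℤ) := by
    rcases hA.isCornerSum.col_step i j with h | h <;>
      rcases hA.isCornerSum.row_step (i + 1) j with h' | h' <;> simp [h, h']
  rw [nuASM, sum_inversions]
  simp only [hA.sum_filter_gt, hA.sum_filter_ge, hfactor, Finset.sum_range]
  rw [← Int.toNat_natCast (∑ i : Fin n, ∑ j : Fin n, _)]
  push_cast
  rfl

theorem muASM_eq (A : Fin n → Fin n → ℤ) :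
    muASM A = ∑ i ∈ range n, ∑ j ∈ range n,
      if cornerEntry (cornerSum A) i j = -1 then 1 else 0 := by
  simp only [muASM, card_filter, Fintype.sum_prod_type, Finset.sum_range, cornerEntry_cornerSum,
    extendASM_val]

theorem IsASM.rhoT_eq (hA : IsASM A) (hn : 0 < n) :
    rhoT A = ∑ j ∈ range n, (1 - cornerSum A (1, j + 1)).toNat := by
  have ha := hA.isCornerSum
  have hrow (j : Fin n) : A ⟨0, hn⟩ j = cornerSum A (1, j + 1) - cornerSum A (1, j) := by
    rw [← ha.cornerEntry_zero_left, cornerEntry_cornerSum, extendASM_of_lt A hn j.2]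
  rw [← card_zeros_before_one (f := fun j => cornerSum A (1, j)) (ha.left 1)
    (by simpa using ha.right hn) (ha.row_step 1)]
  simp only [rhoT, hrow]

theorem IsASM.rhoL_eq (hA : IsASM A) (hn : 0 < n) :
    rhoL A = ∑ i ∈ range n, (1 - cornerSum A (i + 1, 1)).toNat := by
  have := hA.transpose.rhoT_eq hn
  rwa [cornerSum_transpose] at this

end Statistics

/-! ### Interlacing corner sums -/

/-- Corner sums `a` of size `n + 1` and `b` of size `n` interlace if they come from compatible ASMs
in the sense of Robbins and Rumsey, that is, if they fit together into the height function of a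
domino tiling of an Aztec diamond. -/
def Interlaces (a b : ℕ × ℕ → ℤ) : Prop :=
  ∀ i j, a (i, j) ≤ b (i, j) ∧ b (i, j) ≤ a (i + 1, j) ∧ b (i, j) ≤ a (i, j + 1) ∧
    a (i + 1, j + 1) ≤ b (i, j) + 1

/-- The corner sums of size `n` that interlace with given corner sums `a` of size `n + 1`. -/
noncomputable def interlacingBelow (n : ℕ) (a : ℕ × ℕ → ℤ) : Finset (ℕ × ℕ → ℤ) :=
  piExtend (range (n + 1) ×ˢ range (n + 1)) (fun p => min (p.1 : ℤ) p.2) fun p =>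
    Icc (max (a p) (a (p.1 + 1, p.2 + 1) - 1)) (min (a (p.1 + 1, p.2)) (a (p.1, p.2 + 1)))

/-- The corner sums of size `n + 1` that interlace with given corner sums `b` of size `n`. -/
noncomputable def interlacingAbove (n : ℕ) (b : ℕ × ℕ → ℤ) : Finset (ℕ × ℕ → ℤ) :=
  piExtend (Ico 1 (n + 1) ×ˢ Ico 1 (n + 1)) (fun p => min (p.1 : ℤ) p.2) fun p =>
    Icc (max (b (p.1 - 1, p.2)) (b (p.1, p.2 - 1))) (min (b p) (b (p.1 - 1, p.2 - 1) + 1))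

namespace Interlaces

variable {n : ℕ} {a b : ℕ × ℕ → ℤ}

theorem isCornerSum_below (h : Interlaces a b) (ha : IsCornerSum (n + 1) a) :
    IsCornerSum n b where
  boundary i j hij := by
    have := h i j
    have := ha.boundary i j
    have := ha.boundary (i + 1) j
    have := ha.boundary i (j + 1)
    have := ha.boundary (i + 1) (j + 1)
    omega
  row_step i j := by
    have := h i j
    have := h i (j + 1)
    omega
  col_step i j := by
    have := h i j
    have := h (i + 1) j
    omega

theorem isCornerSum_above (h : Interlaces a b)
    (ha : ∀ i j, i = 0 ∨ j = 0 ∨ n ≤ i ∨ n ≤ j → a (i, j) = min (i : ℤ) j) :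
    IsCornerSum n a where
  boundary := ha
  row_step := by
    rintro (_ | i) j
    · have := ha 0 j
      have := ha 0 (j + 1)
      omega
    · have := h i j
      have := h (i + 1) j
      omega
  col_step := by
    rintro i (_ | j)
    · have := ha i 0
      have := ha (i + 1) 0
      omega
    · have := h i j
      have := h i (j + 1)
      omega

end Interlaces

theorem mem_interlacingBelow {n : ℕ} {a b : ℕ × ℕ → ℤ} (ha : IsCornerSum (n + 1) a) :
    b ∈ interlacingBelow n a ↔ Interlaces a b := by
  simp only [interlacingBelow, mem_piExtend, Prod.forall, mem_product, mem_range, mem_Icc]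
  constructor
  · rintro ⟨hin, hout⟩ i j
    by_cases h : i < n + 1 ∧ j < n + 1
    · have := hin i j h
      omega
    · have := hout i j h
      have := ha.boundary i j
      have := ha.boundary (i + 1) j
      have := ha.boundary i (j + 1)
      have := ha.boundary (i + 1) (j + 1)
      omega
  · intro h
    refine ⟨fun i j _ => ?_, fun i j hij => (h.isCornerSum_below ha).boundary i j (by omega)⟩
    have := h i j
    omega

theorem boundary_of_mem_interlacingAbove {n : ℕ} {a b : ℕ × ℕ → ℤ}
    (ha : a ∈ interlacingAbove n b) (i j : ℕ) (hij : i = 0 ∨ j = 0 ∨ n + 1 ≤ i ∨ n + 1 ≤ j) :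
    a (i, j) = min (i : ℤ) j := by
  simp only [interlacingAbove, mem_piExtend, Prod.forall, mem_product, mem_Ico] at ha
  exact ha.2 i j (by omega)

theorem interlaces_of_mem_interlacingAbove {n : ℕ} {a b : ℕ × ℕ → ℤ} (hb : IsCornerSum n b)
    (ha : a ∈ interlacingAbove n b) : Interlaces a b := by
  have hbdry := boundary_of_mem_interlacingAbove ha
  simp only [interlacingAbove, mem_piExtend, Prod.forall, mem_product, mem_Ico, mem_Icc] at ha
  obtain ⟨hin, -⟩ := ha
  intro i j
  have := hb.boundary i j
  refine ⟨?_, ?_, ?_, ?_⟩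
  · have := hbdry i j
    have := hin i j
    omega
  · have := hbdry (i + 1) j
    have := hin (i + 1) j
    rw [Nat.add_sub_cancel] at this
    omega
  · have := hbdry i (j + 1)
    have := hin i (j + 1)
    rw [Nat.add_sub_cancel] at this
    omega
  · have := hbdry (i + 1) (j + 1)
    have := hin (i + 1) (j + 1)
    rw [Nat.add_sub_cancel, Nat.add_sub_cancel] at this
    omega

theorem mem_interlacingAbove {n : ℕ} {a b : ℕ × ℕ → ℤ} (hb : IsCornerSum n b) :
    a ∈ interlacingAbove n b ↔ IsCornerSum (n + 1) a ∧ Interlaces a b := by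
  constructor
  · intro hab
    have h := interlaces_of_mem_interlacingAbove hb hab
    exact ⟨h.isCornerSum_above (boundary_of_mem_interlacingAbove hab), h⟩
  · rintro ⟨ha, h⟩
    simp only [interlacingAbove, mem_piExtend, Prod.forall, mem_product, mem_Ico, mem_Icc]
    refine ⟨?_, fun i j hij => ha.boundary i j (by omega)⟩
    rintro (_ | i) (_ | j) hij
    · omega
    · omega
    · omega
    · have := h i j
      have := h i (j + 1)
      have := h (i + 1) j
      have := h (i + 1) (j + 1)
      simp only [add_tsub_cancel_right]
      omega

/-! ### Weights and the recursion -/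

section Weights

variable {R : Type*} [CommRing R] (x z1 z2 : R)

/-- The factor contributed to `x ^ ν` by the position `(i, j)`. -/
def invWeight (a : ℕ × ℕ → ℤ) (i j : ℕ) : R :=
  if a (i, j) = a (i + 1, j) ∧ a (i + 1, j) = a (i + 1, j + 1) then x else 1

/-- A factor `w` for each matrix entry equal to `c`. -/
def entryWeight (c : ℤ) (w : R) (a : ℕ × ℕ → ℤ) (i j : ℕ) : R :=
  if cornerEntry a i j = c then w else 1

/-- In the row or column with index `0`, a factor `z` for each partial sum `v` equal to `0`. -/
def edgeWeight (z : R) (i : ℕ) (v : ℤ) : R :=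
  if i = 0 then z ^ (1 - v).toNat else 1

/-- The factor contributed to `z1 ^ ρT * z2 ^ ρL` by the corner sum `v` at `(i + 1, j + 1)`. -/
def boundaryWeight (i j : ℕ) (v : ℤ) : R :=
  edgeWeight z1 i v * edgeWeight z2 j v

/-- The generating function `Zadj n x (x + 1) z1 z2`, as a sum over corner sums. -/
noncomputable def cornerGF (n : ℕ) : R :=
  ∑ a ∈ cornerSums n, ∏ i ∈ range n, ∏ j ∈ range n,
    invWeight x a i j * entryWeight (-1) (x + 1) a i j *
      boundaryWeight z1 z2 i j (a (i + 1, j + 1))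

variable {x z1 z2}

theorem edgeWeight_of_one_le (z : R) (i : ℕ) {v : ℤ} (hv : 1 ≤ v) : edgeWeight z i v = 1 := by
  simp only [edgeWeight, Int.toNat_of_nonpos (sub_nonpos.2 hv), pow_zero, ite_self]

theorem boundaryWeight_of_one_le (i j : ℕ) {v : ℤ} (hv : 1 ≤ v) :
    boundaryWeight z1 z2 i j v = 1 := by
  simp only [boundaryWeight, edgeWeight_of_one_le _ _ hv, mul_one]

theorem boundaryWeight_of_not_edge {i j : ℕ} (h : ¬(i = 0 ∨ j = 0)) (v : ℤ) :
    boundaryWeight z1 z2 i j v = 1 := by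
  rw [not_or] at h
  simp [boundaryWeight, edgeWeight, h.1, h.2]

namespace IsCornerSum

variable {n : ℕ} {a b : ℕ × ℕ → ℤ}

theorem sum_Icc_below (ha : IsCornerSum n a) (i j : ℕ) :
    ∑ v ∈ Icc (max (a (i, j)) (a (i + 1, j + 1) - 1)) (min (a (i + 1, j)) (a (i, j + 1))),
        x ^ (v + 1 - a (i + 1, j + 1)).toNat =
      invWeight x a i j * entryWeight (-1) (x + 1) a i j := by
  have hrow := ha.row_step i j
  have hcol := ha.col_step i j
  have hrow' := ha.row_step (i + 1) j
  have hcol' := ha.col_step i (j + 1)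
  have hentry : cornerEntry a i j =
      a (i + 1, j + 1) - a (i + 1, j) - a (i, j + 1) + a (i, j) := rfl
  by_cases hneg : cornerEntry a i j = -1
  · have hs : a (i + 1, j + 1) = a (i, j) + 1 := by omega
    have hr : a (i + 1, j) = a (i, j) + 1 := by omega
    have hq : a (i, j + 1) = a (i, j) + 1 := by omega
    simp [entryWeight, hneg, invWeight, hs, hr, hq, Icc_self_add_one, add_comm x 1]
  · rw [entryWeight, if_neg hneg, invWeight, mul_one,
      show max (a (i, j)) (a (i + 1, j + 1) - 1) = min (a (i + 1, j)) (a (i, j + 1)) by omega,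
      Icc_self, sum_singleton]
    split_ifs with hinv
    · rw [show (min (a (i + 1, j)) (a (i, j + 1)) + 1 - a (i + 1, j + 1)).toNat = 1 by omega,
        pow_one]
    · rw [show (min (a (i + 1, j)) (a (i, j + 1)) + 1 - a (i + 1, j + 1)).toNat = 0 by omega,
        pow_zero]

theorem eq_zero_of_edge (hb : IsCornerSum n b) (i j : ℕ) (h : i = 0 ∨ j = 0) :
    b (i, j) = 0 ∧ b (i + 1, j + 1) ≤ 1 := by
  rcases h with rfl | rfl
  · have := hb.top j
    have := hb.top (j + 1)
    have := hb.col_step 0 (j + 1)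
    omega
  · have := hb.left i
    have := hb.left (i + 1)
    have := hb.row_step (i + 1) 0
    omega

theorem sum_Icc_above (hb : IsCornerSum n b) (i j : ℕ) :
    ∑ v ∈ Icc (max (b (i, j + 1)) (b (i + 1, j))) (min (b (i + 1, j + 1)) (b (i, j) + 1)),
        x ^ (b (i, j) + 1 - v).toNat * boundaryWeight z1 z2 i j v =
      invWeight x b i j * boundaryWeight z1 z2 i j (b (i + 1, j + 1)) *
        entryWeight 1 (x * boundaryWeight z1 z2 i j 0 + 1) b i j := by
  have hrow := hb.row_step i j
  have hcol := hb.col_step i j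
  have hrow' := hb.row_step (i + 1) j
  have hcol' := hb.col_step i (j + 1)
  have hedge := hb.eq_zero_of_edge i j
  have hentry : cornerEntry b i j =
      b (i + 1, j + 1) - b (i + 1, j) - b (i, j + 1) + b (i, j) := rfl
  by_cases hone : cornerEntry b i j = 1
  · have hs : b (i + 1, j + 1) = b (i, j) + 1 := by omega
    have hr : b (i + 1, j) = b (i, j) := by omega
    have hq : b (i, j + 1) = b (i, j) := by omega
    have hsplit : boundaryWeight z1 z2 i j (b (i, j)) =
        boundaryWeight z1 z2 i j (b (i, j) + 1) * boundaryWeight z1 z2 i j 0 := by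
      by_cases h : i = 0 ∨ j = 0
      · rw [(hedge h).1, boundaryWeight_of_one_le i j (v := 0 + 1) le_rfl, one_mul]
      · simp only [boundaryWeight_of_not_edge h, mul_one]
    rw [entryWeight, if_pos hone, invWeight, if_neg (by omega), hs, hr, hq, max_self, min_self,
      Icc_self_add_one, sum_pair (by omega), add_sub_cancel_left, sub_self, hsplit, Int.toNat_one,
      Int.toNat_zero]
    ring
  · have hbw : boundaryWeight z1 z2 i j (max (b (i, j + 1)) (b (i + 1, j))) =
        boundaryWeight z1 z2 i j (b (i + 1, j + 1)) := by
      by_cases h : i = 0 ∨ j = 0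
      · congr 1
        have := hedge h
        omega
      · simp only [boundaryWeight_of_not_edge h]
    rw [entryWeight, if_neg hone, invWeight, mul_one,
      show min (b (i + 1, j + 1)) (b (i, j) + 1) = max (b (i, j + 1)) (b (i + 1, j)) by omega,
      Icc_self, sum_singleton, hbw]
    congr 1
    split_ifs with hinv
    · rw [show (b (i, j) + 1 - max (b (i, j + 1)) (b (i + 1, j))).toNat = 1 by omega, pow_one]
    · rw [show (b (i, j) + 1 - max (b (i, j + 1)) (b (i + 1, j))).toNat = 0 by omega, pow_zero]

theorem sum_interlacingBelow (ha : IsCornerSum n a) (k : ℕ) :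
    ∑ b ∈ interlacingBelow k a, ∏ i ∈ range (k + 1), ∏ j ∈ range (k + 1),
        x ^ (b (i, j) + 1 - a (i + 1, j + 1)).toNat =
      ∏ i ∈ range (k + 1), ∏ j ∈ range (k + 1),
        invWeight x a i j * entryWeight (-1) (x + 1) a i j := by
  have key := sum_piExtend_prod (range (k + 1) ×ˢ range (k + 1)) (fun p => min (p.1 : ℤ) p.2)
    (fun p => Icc (max (a p) (a (p.1 + 1, p.2 + 1) - 1))
      (min (a (p.1 + 1, p.2)) (a (p.1, p.2 + 1))))
    fun p v => x ^ (v + 1 - a (p.1 + 1, p.2 + 1)).toNat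
  simpa only [prod_product, ha.sum_Icc_below, interlacingBelow] using key

theorem sum_interlacingAbove (hb : IsCornerSum n b) :
    ∑ a ∈ interlacingAbove n b, ∏ i ∈ range (n + 1), ∏ j ∈ range (n + 1),
        x ^ (b (i, j) + 1 - a (i + 1, j + 1)).toNat *
          boundaryWeight z1 z2 i j (a (i + 1, j + 1)) =
      ∏ i ∈ range n, ∏ j ∈ range n,
        invWeight x b i j * boundaryWeight z1 z2 i j (b (i + 1, j + 1)) *
          entryWeight 1 (x * boundaryWeight z1 z2 i j 0 + 1) b i j := by
  have htrim : ∀ a ∈ interlacingAbove n b, ∏ i ∈ range (n + 1), ∏ j ∈ range (n + 1),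
        x ^ (b (i, j) + 1 - a (i + 1, j + 1)).toNat *
          boundaryWeight z1 z2 i j (a (i + 1, j + 1)) =
      ∏ i ∈ range n, ∏ j ∈ range n,
        x ^ (b (i, j) + 1 - a (i + 1, j + 1)).toNat *
          boundaryWeight z1 z2 i j (a (i + 1, j + 1)) := by
    intro a ha
    obtain ⟨ha, -⟩ := (mem_interlacingAbove hb).1 ha
    have hexp (k : ℕ) : (k + 1 - (k + 1 : ℕ) : ℤ).toNat = 0 := by omega
    refine prod_range_succ_square (fun j hj => ?_) fun i hi => ?_
    · rw [hb.bottom hj, ha.bottom (by omega), hexp, boundaryWeight_of_one_le _ _ (by omega),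
        pow_zero, one_mul]
    · rw [hb.right hi, ha.right (by omega), hexp, boundaryWeight_of_one_le _ _ (by omega),
        pow_zero, one_mul]
  rw [sum_congr rfl htrim]
  have key := sum_piExtend_prod (Ico 1 (n + 1) ×ˢ Ico 1 (n + 1)) (fun p => min (p.1 : ℤ) p.2)
    (fun p => Icc (max (b (p.1 - 1, p.2)) (b (p.1, p.2 - 1)))
      (min (b p) (b (p.1 - 1, p.2 - 1) + 1)))
    fun p v => x ^ (b (p.1 - 1, p.2 - 1) + 1 - v).toNat *
      boundaryWeight z1 z2 (p.1 - 1) (p.2 - 1) v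
  simpa only [prod_product, prod_Ico_eq_prod_range, add_tsub_cancel_right, add_tsub_cancel_left,
    add_comm 1 (_ : ℕ), hb.sum_Icc_above, interlacingAbove] using key

theorem boundaryWeight_of_one_one (hb : IsCornerSum n b) (h : b (1, 1) = 1) (i j : ℕ) :
    boundaryWeight z1 z2 i j (b (i + 1, j + 1)) = 1 := by
  rcases i with _ | i
  · exact boundaryWeight_of_one_le _ _ (hb.one_le_of_one_one h j)
  rcases j with _ | j
  · exact boundaryWeight_of_one_le _ _ (hb.swap.one_le_of_one_one h (i + 1))
  · exact boundaryWeight_of_not_edge (by simp) _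

theorem prod_entryWeight_one_row (hb : IsCornerSum (n + 1) b) (w : R) :
    ∏ j ∈ range n, entryWeight 1 w b 0 (j + 1) = if b (1, 1) = 1 then 1 else w := by
  have hentry (j : ℕ) : cornerEntry b 0 (j + 1) ≠ -1 := by
    have := hb.row_step 1 (j + 1)
    rw [hb.cornerEntry_zero_left]
    omega
  have hsum : ∑ j ∈ range n, cornerEntry b 0 (j + 1) = 1 - b (1, 1) := by
    rw [sum_range_cornerEntry, hb.right (by omega), hb.top, hb.top]
    simp
  have hcorner := hb.one_one_cases
  simp only [entryWeight]
  rw [prod_ite_eq_one_entries (k := (1 - b (1, 1)).toNat) (fun j _ => hb.cornerEntry_cases 0 _) w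
    (by rw [hsum]; omega)]
  rcases hcorner with h | h <;> simp [h, hentry]

theorem prod_entryWeight_one_col (hb : IsCornerSum (n + 1) b) (w : R) :
    ∏ i ∈ range n, entryWeight 1 w b (i + 1) 0 = if b (1, 1) = 1 then 1 else w := by
  simpa only [entryWeight, cornerEntry_swap, Function.comp_apply, Prod.swap_prod_mk] using
    hb.swap.prod_entryWeight_one_row w

theorem prod_entryWeight_one_inner (hb : IsCornerSum (n + 1) b) (w : R) :
    ∏ i ∈ range n, ∏ j ∈ range n, entryWeight 1 w b (i + 1) (j + 1) =
      w ^ (if b (1, 1) = 1 then n else n - 1) *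
        ∏ i ∈ range n, ∏ j ∈ range n, entryWeight (-1) w b (i + 1) (j + 1) := by
  have hsum : ∑ p ∈ range n ×ˢ range n, cornerEntry b (p.1 + 1) (p.2 + 1) =
      (if b (1, 1) = 1 then n else n - 1 : ℕ) := by
    rw [sum_product, sum_range_sum_range_cornerEntry, hb.right le_rfl, hb.right (by omega),
      hb.bottom (by omega)]
    have := hb.one_one_cases
    have : n = 0 → b (1, 1) = 1 := by
      rintro rfl
      simpa using hb.boundary 1 1 (by simp)
    split_ifs <;> push_cast <;> omega
  simpa only [prod_product, entryWeight] using
    prod_ite_eq_one_entries (fun p _ => hb.cornerEntry_cases (p.1 + 1) (p.2 + 1)) w hsum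

theorem prod_entryWeight_neg_one (hb : IsCornerSum (n + 1) b) (w : R) :
    ∏ i ∈ range (n + 1), ∏ j ∈ range (n + 1), entryWeight (-1) w b i j =
      ∏ i ∈ range n, ∏ j ∈ range n, entryWeight (-1) w b (i + 1) (j + 1) := by
  have hrow (j : ℕ) : entryWeight (-1) w b 0 j = 1 := by
    have := hb.row_step 1 j
    rw [entryWeight, hb.cornerEntry_zero_left, if_neg (by omega)]
  have hcol (i : ℕ) : entryWeight (-1) w b i 0 = 1 := by
    have := hb.col_step i 1
    rw [entryWeight, hb.cornerEntry_zero_right, if_neg (by omega)]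
  simp only [prod_range_succ_square', hrow, hcol, prod_const_one, one_mul]

/-- Each row and column has one more `1` than it has `-1`s, and there is no `-1` in the first row
and column. -/
theorem prod_entryWeight_one (hb : IsCornerSum (n + 1) b) :
    ∏ i ∈ range (n + 1), ∏ j ∈ range (n + 1),
        entryWeight 1 (x * boundaryWeight z1 z2 i j 0 + 1) b i j =
      (if b (1, 1) = 1 then (x + 1) ^ n * (x * (z1 * z2) + 1)
        else (x + 1) ^ (n - 1) * ((x * z1 + 1) * (x * z2 + 1))) *
        ∏ i ∈ range (n + 1), ∏ j ∈ range (n + 1), entryWeight (-1) (x + 1) b i j := by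
  have hcorner : entryWeight 1 (x * (z1 * z2) + 1) b 0 0 =
      if b (1, 1) = 1 then x * (z1 * z2) + 1 else 1 := by
    rw [entryWeight, hb.cornerEntry_zero_left, hb.left]
    simp
  rw [hb.prod_entryWeight_neg_one, prod_range_succ_square']
  simp only [boundaryWeight, edgeWeight, Nat.add_eq_zero_iff, one_ne_zero, and_false, if_true,
    if_false, sub_zero, Int.toNat_one, pow_one, one_mul, mul_one, hcorner,
    hb.prod_entryWeight_one_row, hb.prod_entryWeight_one_col, hb.prod_entryWeight_one_inner]
  split_ifs <;> ring

end IsCornerSum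

theorem cornerGF_one : cornerGF x z1 z2 1 = 1 := by
  have hunique : cornerSums 1 = {fun p => min (p.1 : ℤ) p.2} := by
    ext a
    rw [mem_cornerSums, mem_singleton]
    constructor
    · intro ha
      funext ⟨i, j⟩
      exact ha.boundary i j (by omega)
    · rintro rfl
      exact ⟨fun i j _ => rfl, fun i j => by dsimp only; omega, fun i j => by dsimp only; omega⟩
  rw [cornerGF, hunique]
  simp [invWeight, entryWeight, cornerEntry, boundaryWeight_of_one_le]

theorem cornerGF_zero_zero (n : ℕ) :
    cornerGF x 0 0 (n + 1) = ∑ b ∈ cornerSums (n + 1) with b (1, 1) = 1,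
      ∏ i ∈ range (n + 1), ∏ j ∈ range (n + 1),
        invWeight x b i j * entryWeight (-1) (x + 1) b i j *
          boundaryWeight z1 z2 i j (b (i + 1, j + 1)) := by
  rw [cornerGF, sum_filter]
  refine sum_congr rfl fun b hb => ?_
  rw [mem_cornerSums] at hb
  split_ifs with h
  · simp only [hb.boundaryWeight_of_one_one h]
  · have h0 : b (1, 1) = 0 := hb.one_one_cases.resolve_right h
    refine prod_eq_zero (mem_range.2 n.succ_pos) (prod_eq_zero (mem_range.2 n.succ_pos) ?_)
    simp [boundaryWeight, edgeWeight, h0]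

theorem cornerGF_succ_eq_sum (n : ℕ) :
    cornerGF x z1 z2 (n + 1) = ∑ b ∈ cornerSums n, ∏ i ∈ range n, ∏ j ∈ range n,
      invWeight x b i j * boundaryWeight z1 z2 i j (b (i + 1, j + 1)) *
        entryWeight 1 (x * boundaryWeight z1 z2 i j 0 + 1) b i j := by
  calc cornerGF x z1 z2 (n + 1)
    _ = ∑ a ∈ cornerSums (n + 1), ∑ b ∈ interlacingBelow n a,
          ∏ i ∈ range (n + 1), ∏ j ∈ range (n + 1),
            x ^ (b (i, j) + 1 - a (i + 1, j + 1)).toNat *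
              boundaryWeight z1 z2 i j (a (i + 1, j + 1)) := by
      refine sum_congr rfl fun a ha => ?_
      simp only [prod_mul_distrib, ← sum_mul, (mem_cornerSums.1 ha).sum_interlacingBelow]
    _ = ∑ b ∈ cornerSums n, ∑ a ∈ interlacingAbove n b,
          ∏ i ∈ range (n + 1), ∏ j ∈ range (n + 1),
            x ^ (b (i, j) + 1 - a (i + 1, j + 1)).toNat *
              boundaryWeight z1 z2 i j (a (i + 1, j + 1)) := by
      refine sum_comm' fun a b => ?_
      rw [mem_cornerSums, mem_cornerSums]
      constructor
      · rintro ⟨ha, hab⟩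
        rw [mem_interlacingBelow ha] at hab
        have hb := hab.isCornerSum_below ha
        exact ⟨(mem_interlacingAbove hb).2 ⟨ha, hab⟩, hb⟩
      · rintro ⟨hab, hb⟩
        obtain ⟨ha, hab⟩ := (mem_interlacingAbove hb).1 hab
        exact ⟨ha, (mem_interlacingBelow ha).2 hab⟩
    _ = _ := sum_congr rfl fun b hb => (mem_cornerSums.1 hb).sum_interlacingAbove

/-- For `m = 0` the truncated exponent `m - 1` does no harm, since the last factor vanishes. -/
theorem cornerGF_succ_succ (m : ℕ) :
    cornerGF x z1 z2 (m + 2) =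
      (x + 1) ^ m * (x * (z1 * z2) + 1) * cornerGF x 0 0 (m + 1) +
        (x + 1) ^ (m - 1) * ((x * z1 + 1) * (x * z2 + 1)) *
          (cornerGF x z1 z2 (m + 1) - cornerGF x 0 0 (m + 1)) := by
  have hsplit := sum_filter_add_sum_filter_not (cornerSums (m + 1)) (fun b => b (1, 1) = 1)
    fun b => ∏ i ∈ range (m + 1), ∏ j ∈ range (m + 1),
      invWeight x b i j * entryWeight (-1) (x + 1) b i j *
        boundaryWeight z1 z2 i j (b (i + 1, j + 1))
  rw [← cornerGF_zero_zero, ← cornerGF] at hsplit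
  rw [← eq_sub_iff_add_eq'.2 hsplit, cornerGF_zero_zero (z1 := z1) (z2 := z2),
    cornerGF_succ_eq_sum, mul_sum, mul_sum,
    ← sum_filter_add_sum_filter_not (cornerSums (m + 1)) fun b => b (1, 1) = 1]
  congr 1 <;> refine sum_congr rfl fun b hb => ?_
  all_goals
    rw [mem_filter, mem_cornerSums] at hb
    simp only [prod_mul_distrib, hb.1.prod_entryWeight_one, hb.2, if_true, if_false]
    ring

theorem cornerGF_zero_zero_succ (m : ℕ) : cornerGF x 0 0 (m + 1) = (x + 1) ^ m.choose 2 := by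
  induction m with
  | zero => simpa using cornerGF_one
  | succ m ih =>
    rw [cornerGF_succ_succ, ih, Nat.choose_succ_succ' m 1, Nat.choose_one_right, pow_add]
    ring

theorem mul_cornerGF (m : ℕ) :
    (x * z1 * z2 + z1 + z2 - 1) * cornerGF x z1 z2 (m + 2) =
      z1 * z2 * ((x * z1 + 1) * (x * z2 + 1)) ^ (m + 1) * (x + 1) ^ m.choose 2 -
        (z1 - 1) * (z2 - 1) * (x + 1) ^ (m + 1).choose 2 := by
  induction m with
  | zero =>
    rw [cornerGF_succ_succ, zero_add, cornerGF_one, cornerGF_one]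
    simp only [pow_zero, one_mul, mul_one, zero_tsub, sub_self, mul_zero, add_zero, pow_one,
      Nat.choose_zero_succ, Nat.choose_succ_self]
    ring
  | succ m ih =>
    have hchoose (k : ℕ) : (k + 1).choose 2 = k + k.choose 2 := by
      rw [Nat.choose_succ_succ' k 1, Nat.choose_one_right]
    rw [cornerGF_succ_succ, cornerGF_zero_zero_succ, Nat.add_sub_cancel, hchoose (m + 1)]
    rw [hchoose m] at ih ⊢
    simp only [pow_add, pow_one] at ih ⊢
    linear_combination (x + 1) ^ m * ((x * z1 + 1) * (x * z2 + 1)) * ih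

namespace IsASM

variable {n : ℕ} {A : Fin n → Fin n → ℤ}

theorem prod_invWeight (hA : IsASM A) (x : R) :
    ∏ i ∈ range n, ∏ j ∈ range n, invWeight x (cornerSum A) i j = x ^ nuASM A := by
  simp only [hA.nuASM_eq, ← prod_pow_eq_pow_sum, pow_ite, pow_one, pow_zero, invWeight]

theorem prod_boundaryWeight (hA : IsASM A) (hn : 0 < n) (z1 z2 : R) :
    ∏ i ∈ range n, ∏ j ∈ range n, boundaryWeight z1 z2 i j (cornerSum A (i + 1, j + 1)) =
      z1 ^ rhoT A * z2 ^ rhoL A := by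
  have hedge (z : R) (v : ℕ → ℕ → ℤ) :
      ∏ i ∈ range n, ∏ j ∈ range n, edgeWeight z i (v i j) =
        ∏ j ∈ range n, z ^ (1 - v 0 j).toNat := by
    rw [prod_eq_single_of_mem 0 (mem_range.2 hn) fun i _ hi => by simp [edgeWeight, hi]]
    simp [edgeWeight]
  simp only [boundaryWeight, prod_mul_distrib, hA.rhoT_eq hn, hA.rhoL_eq hn,
    ← prod_pow_eq_pow_sum]
  rw [prod_comm (f := fun i j => edgeWeight z2 j _), hedge, hedge]

end IsASM

theorem prod_entryWeight_neg_one_eq_pow {n : ℕ} (A : Fin n → Fin n → ℤ) (w : R) :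
    ∏ i ∈ range n, ∏ j ∈ range n, entryWeight (-1) w (cornerSum A) i j = w ^ muASM A := by
  simp only [muASM_eq, ← prod_pow_eq_pow_sum, pow_ite, pow_one, pow_zero, entryWeight]

theorem Zadj_eq_cornerGF {n : ℕ} (hn : 0 < n) :
    Zadj n x (x + 1) z1 z2 = cornerGF x z1 z2 n := by
  classical
  rw [Zadj, Zqua, ← sum_filter, cornerGF, cornerSums,
    sum_image (cornerSum_injective.comp asmMat_injective).injOn]
  refine sum_congr rfl fun e he => ?_
  have hA : IsASM (asmMat e) := (mem_filter.1 he).2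
  simp only [Function.comp_apply, prod_mul_distrib, hA.prod_invWeight,
    prod_entryWeight_neg_one_eq_pow, hA.prod_boundaryWeight hn, one_pow, mul_one]
  ring

end Weights

/-- The adjacent-boundary doubly-refined ASM generating function at `y = x + 1`,
stated for all values of the variables in any commutative ring, equivalently
as an identity of polynomials in `ℤ[x,z1,z2]`. -/
theorem stmt15 {R : Type*} [CommRing R] (x z1 z2 : R) (n : ℕ) (hn : 3 ≤ n) :
    (x * z1 * z2 + z1 + z2 - 1) * Zadj n x (x + 1) z1 z2 =
      z1 * z2 * ((x * z1 + 1) * (x * z2 + 1)) ^ (n - 1) *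
          (x + 1) ^ ((n - 2) * (n - 3) / 2)
      - (z1 - 1) * (z2 - 1) * (x + 1) ^ ((n - 1) * (n - 2) / 2) := by
  obtain ⟨m, rfl⟩ : ∃ m, n = m + 2 := ⟨n - 2, by omega⟩
  rw [Zadj_eq_cornerGF (by omega), mul_cornerGF, Nat.choose_two_right, Nat.choose_two_right]
  rfl
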